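/- For every complex number q with 0 < |q| < 1, one has ∑_{i,j,k,l ≥ 0} q^{2i²+2j²+2k²+2l²−2ij−2ik−2il+2jk+2jl−i+k−l} / ((q²;q²)_i (q²;q²)_j (q²;q²)_k (q²;q²)_l) = 2 J_2² / J_1². -/

import Mathlib

open scoped BigOperators

/-- The infinite q-Pochhammer symbol `(a; q)_∞ = ∏_{k=0}^∞ (1 - a q^k)`. -/
noncomputable def qPochInf (a q : ℂ) : ℂ := ∏' n : ℕ, (1 - a * q ^ n)

/-- The finite q-Pochhammer symbol `(a; q)_n = ∏_{k=0}^{n-1} (1 - a q^k)`. -/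
noncomputable def qPoch (a q : ℂ) (n : ℕ) : ℂ :=
  Finset.prod (Finset.range n) (fun k => 1 - a * q ^ k)

/-- `J_m = (q^m; q^m)_∞`. -/
noncomputable def J (q : ℂ) (m : ℕ) : ℂ := qPochInf (q ^ m) (q ^ m)

/-- `J_{a,m} = (q^a; q^m)_∞ (q^{m-a}; q^m)_∞ (q^m; q^m)_∞`. -/
noncomputable def Jam (q : ℂ) (a m : ℕ) : ℂ :=
  qPochInf (q ^ a) (q ^ m) * qPochInf (q ^ (m - a)) (q ^ m) * qPochInf (q ^ m) (q ^ m)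

/-!
The index `i` interacts with `j`, `k`, `l` only through `j + k + l`, so the inner sum over `j`, `k`,
`l` may be replaced by any other sum with the same generating series. That series is
`(-q X; q²)_∞ * pairSeries q`. A `q`-Vandermonde expansion of each pair `(k, l)` turns
`pairSeries q` into `(-X; q²)_∞ (-q² X; q²)_∞ / (X²; q²)_∞`, so the series equals
`(-q² X; q²)_∞ / (X; q)_∞`, which has only two summation indices, `k` and `s`.

For fixed `s`, sum first over the pairs `(i, k)` with a given difference `n = i - k`: up to the
factor `q ^ n²` this is a Durfee rectangle sum whose value does not depend on `n`. What remains is a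
shift of the theta series `∑ q ^ (2 n² - n) = J_2² / J_1`, evaluated by the Jacobi triple product,
and the shift leaves the factor `q ^ (s.choose 2)`. Euler's expansion of
`(-1; q)_∞ = 2 J_2 / J_1` then sums over `s`.
-/

open Filter Finset PowerSeries Topology

section QuotientsOfPochhammer

/-- `1 / (q; q)_n`, the coefficient of `X ^ n` in `1 / (X; q)_∞`. -/
noncomputable def invQPoch (q : ℂ) (n : ℕ) : ℂ := (qPoch q q n)⁻¹

@[simp]
lemma invQPoch_zero (q : ℂ) : invQPoch q 0 = 1 := by
  simp [invQPoch, qPoch]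

lemma not_isOfFinOrder_of_norm_lt_one {q : ℂ} (hq : ‖q‖ < 1) : ¬IsOfFinOrder q :=
  fun h ↦ hq.ne h.norm_eq_one

lemma not_isOfFinOrder_sq {M : Type*} [Monoid M] {q : M} (hq : ¬IsOfFinOrder q) :
    ¬IsOfFinOrder (q ^ 2) :=
  fun h ↦ hq (h.of_pow two_ne_zero)

lemma one_sub_pow_succ_ne_zero {R : Type*} [Ring R] {q : R} (hq : ¬IsOfFinOrder q) (n : ℕ) :
    1 - q ^ (n + 1) ≠ 0 :=
  fun h ↦ hq (isOfFinOrder_iff_pow_eq_one.2 ⟨n + 1, n.succ_pos, (sub_eq_zero.1 h).symm⟩)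

lemma one_sub_pow_mul_invQPoch_succ {q : ℂ} (hq : ¬IsOfFinOrder q) (n : ℕ) :
    (1 - q ^ (n + 1)) * invQPoch q (n + 1) = invQPoch q n := by
  have := one_sub_pow_succ_ne_zero hq n
  simp only [invQPoch, qPoch, prod_range_succ, ← pow_succ']
  field_simp

-- Induct on `r`, splitting `1 - q ^ (t + u) = (1 - q ^ t) + q ^ t * (1 - q ^ u)`.
lemma sum_antidiagonal_durfee {q : ℂ} (hq : ¬IsOfFinOrder q) (r n : ℕ) :
    ∑ p ∈ antidiagonal r, q ^ (p.2 * (p.2 + n)) *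
      (invQPoch q p.1 * (invQPoch q p.2 * invQPoch q (p.2 + n))) =
      invQPoch q r * invQPoch q (r + n) := by
  induction r generalizing n with
  | zero => simp
  | succ r ih =>
    set term : ℕ → ℕ × ℕ → ℂ := fun n p ↦
      q ^ (p.2 * (p.2 + n)) * (invQPoch q p.1 * (invQPoch q p.2 * invQPoch q (p.2 + n))) with hterm
    have hleft : ∑ p ∈ antidiagonal (r + 1), (1 - q ^ p.1) * term n p =
        ∑ p ∈ antidiagonal r, term n p := by
      rw [Nat.sum_antidiagonal_succ]
      simp only [pow_zero, sub_self, zero_mul, zero_add]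
      refine sum_congr rfl fun p _ ↦ ?_
      simp only [hterm, ← one_sub_pow_mul_invQPoch_succ hq p.1]
      ring
    have hright : ∑ p ∈ antidiagonal (r + 1), q ^ p.1 * (1 - q ^ p.2) * term n p =
        q ^ (r + 1 + n) * ∑ p ∈ antidiagonal r, term (n + 1) p := by
      rw [Nat.sum_antidiagonal_succ', mul_sum]
      simp only [pow_zero, sub_self, mul_zero, zero_mul, zero_add]
      refine sum_congr rfl fun p hp ↦ ?_
      rw [← mem_antidiagonal.1 hp]
      simp only [hterm, ← one_sub_pow_mul_invQPoch_succ hq p.2]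
      ring_nf
    have hsplit : (1 - q ^ (r + 1)) * ∑ p ∈ antidiagonal (r + 1), term n p =
        ∑ p ∈ antidiagonal r, term n p +
          q ^ (r + 1 + n) * ∑ p ∈ antidiagonal r, term (n + 1) p := by
      rw [← hleft, ← hright, mul_sum, ← sum_add_distrib]
      refine sum_congr rfl fun p hp ↦ ?_
      rw [← mem_antidiagonal.1 hp]
      ring
    apply mul_left_cancel₀ (one_sub_pow_succ_ne_zero hq r)
    rw [hsplit, ih, ih, add_right_comm r 1 n, ← add_assoc r n 1]
    linear_combination -(invQPoch q r) * one_sub_pow_mul_invQPoch_succ hq (r + n) -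
      invQPoch q (r + n + 1) * one_sub_pow_mul_invQPoch_succ hq r

lemma sum_range_min_qVandermonde {q : ℂ} (hq : ¬IsOfFinOrder q) (k l : ℕ) :
    ∑ t ∈ range (min k l + 1), q ^ ((k - t) * (l - t)) *
      (invQPoch q t * (invQPoch q (k - t) * invQPoch q (l - t))) =
      invQPoch q k * invQPoch q l := by
  wlog hkl : k ≤ l generalizing k l
  · rw [min_comm, mul_comm (invQPoch q k), ← this l k (le_of_not_ge hkl)]
    exact sum_congr rfl fun t _ ↦ by
      rw [mul_comm (k - t), mul_comm (invQPoch q (k - t))]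
  obtain ⟨n, rfl⟩ := Nat.exists_eq_add_of_le hkl
  rw [← sum_antidiagonal_durfee hq, Nat.sum_antidiagonal_eq_sum_range_succ_mk,
    min_eq_left hkl]
  refine sum_congr rfl fun t ht ↦ ?_
  rw [Nat.sub_add_comm (mem_range_succ_iff.1 ht)]

end QuotientsOfPochhammer

section FormalSeries

/-- `(-X; q)_∞` as a formal power series in `X`, given by Euler's expansion. -/
noncomputable def eulerSeries (q : ℂ) : ℂ⟦X⟧ := mk fun n ↦ q ^ n.choose 2 * invQPoch q n

/-- `1 / (X; q)_∞` as a formal power series in `X`, given by Euler's expansion. -/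
noncomputable def eulerInvSeries (q : ℂ) : ℂ⟦X⟧ := mk (invQPoch q)

@[simp]
lemma coeff_eulerSeries (q : ℂ) (n : ℕ) :
    coeff n (eulerSeries q) = q ^ n.choose 2 * invQPoch q n := coeff_mk _ _

@[simp]
lemma coeff_eulerInvSeries (q : ℂ) (n : ℕ) : coeff n (eulerInvSeries q) = invQPoch q n :=
  coeff_mk _ _

lemma one_sub_pow_mul_coeff_eulerSeries_succ {q : ℂ} (hq : ¬IsOfFinOrder q) (n : ℕ) :
    (1 - q ^ (n + 1)) * coeff (n + 1) (eulerSeries q) = q ^ n * coeff n (eulerSeries q) := by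
  simp only [coeff_eulerSeries, ← one_sub_pow_mul_invQPoch_succ hq n,
    Nat.choose_succ_succ', Nat.choose_one_right]
  ring

lemma eulerSeries_eq {q : ℂ} (hq : ¬IsOfFinOrder q) :
    eulerSeries q = (1 + X) * rescale q (eulerSeries q) := by
  ext n
  rw [add_mul, one_mul, map_add, coeff_rescale]
  cases n with
  | zero => simp
  | succ n =>
    rw [coeff_succ_X_mul, coeff_rescale]
    linear_combination one_sub_pow_mul_coeff_eulerSeries_succ hq n

lemma rescale_eulerInvSeries {q : ℂ} (hq : ¬IsOfFinOrder q) :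
    rescale q (eulerInvSeries q) = (1 - X) * eulerInvSeries q := by
  ext n
  rw [sub_mul, one_mul, map_sub, coeff_rescale]
  cases n with
  | zero => simp
  | succ n =>
    rw [coeff_succ_X_mul]
    simp only [coeff_eulerInvSeries]
    linear_combination -one_sub_pow_mul_invQPoch_succ hq n

lemma eq_of_mul_rescale_eq {R : Type*} [CommRing R] [IsDomain R] {q : R}
    (hq : ¬IsOfFinOrder q) {A B F G : R⟦X⟧}
    (hA : coeff 0 A = 1) (hB : coeff 0 B = 1) (hF : A * rescale q F = B * F)
    (hG : A * rescale q G = B * G) (h0 : coeff 0 F = coeff 0 G) : F = G := by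
  ext n
  induction n using Nat.strong_induction_on with
  | _ n ih =>
    cases n with
    | zero => exact h0
    | succ n =>
      have coeff_mul_sub (C : R⟦X⟧) (hC : coeff 0 C = 1) (H₁ H₂ : R⟦X⟧)
          (hH : ∀ m < n + 1, coeff m H₁ = coeff m H₂) :
          coeff (n + 1) (C * H₁) - coeff (n + 1) (C * H₂) =
            coeff (n + 1) H₁ - coeff (n + 1) H₂ := by
        rw [← map_sub, ← mul_sub, coeff_mul, Nat.sum_antidiagonal_succ, hC, one_mul, map_sub,
          add_eq_left]
        refine sum_eq_zero fun p hp ↦ ?_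
        have hlt : p.2 < n + 1 := by have := mem_antidiagonal.1 hp; omega
        rw [map_sub, hH _ hlt, sub_self, mul_zero]
      have hAdiff := coeff_mul_sub A hA (rescale q F) (rescale q G)
        fun m hm ↦ by rw [coeff_rescale, coeff_rescale, ih m hm]
      have hBdiff := coeff_mul_sub B hB F G ih
      rw [hF, hG, hBdiff, coeff_rescale, coeff_rescale] at hAdiff
      apply mul_left_cancel₀ (one_sub_pow_succ_ne_zero hq n)
      linear_combination hAdiff

lemma rescale_expand_two {R : Type*} [CommRing R] (q : R) (F : R⟦X⟧) :
    rescale q (expand 2 two_ne_zero F) = expand 2 two_ne_zero (rescale (q ^ 2) F) := by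
  ext n
  simp only [coeff_rescale, coeff_expand]
  split_ifs with h
  · rw [← pow_mul, Nat.mul_div_cancel' h]
  · rw [mul_zero]

/-- In product form: `1 / (X ^ 2; q ^ 2)_∞ * (-X; q)_∞ = 1 / (X; q)_∞`. -/
lemma expand_eulerInvSeries_mul_eulerSeries {q : ℂ} (hq : ¬IsOfFinOrder q) :
    expand 2 two_ne_zero (eulerInvSeries (q ^ 2)) *
      (eulerSeries (q ^ 2) * rescale q (eulerSeries (q ^ 2))) = eulerInvSeries q := by
  have hq2 := not_isOfFinOrder_sq hq
  refine eq_of_mul_rescale_eq hq (A := 1 + X) (B := 1 - X ^ 2) (by simp) (by simp) ?_ ?_ ?_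
  · rw [map_mul, map_mul, rescale_expand_two, rescale_eulerInvSeries hq2, rescale_rescale,
      ← pow_two, map_mul, map_sub, map_one, expand_X]
    linear_combination -((1 - X ^ 2) * expand 2 two_ne_zero (eulerInvSeries (q ^ 2)) *
      rescale q (eulerSeries (q ^ 2))) * eulerSeries_eq hq2
  · rw [rescale_eulerInvSeries hq]
    ring
  · simp [coeff_mul, coeff_rescale, coeff_expand]

/-- The generating series of `∑ q ^ ((k - l) ^ 2 + (k - l)) / ((q ^ 2; q ^ 2)_k (q ^ 2; q ^ 2)_l)`
over `k + l = n`. -/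
noncomputable def pairSeries (q : ℂ) : ℂ⟦X⟧ := mk fun n ↦
  ∑ p ∈ antidiagonal n, q ^ (((p.1 : ℤ) - p.2) ^ 2 + (p.1 - p.2)) *
    (invQPoch (q ^ 2) p.1 * invQPoch (q ^ 2) p.2)

lemma two_mul_choose_two_add_self (n : ℕ) : 2 * n.choose 2 + n = n ^ 2 := by
  induction n with
  | zero => rfl
  | succ n ih =>
    rw [Nat.choose_succ_succ', Nat.choose_one_right]
    linarith

lemma sq_pow_choose_two_mul_pow {M : Type*} [Monoid M] (x : M) (n : ℕ) :
    (x ^ 2) ^ n.choose 2 * x ^ n = x ^ n ^ 2 := by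
  rw [← pow_mul, ← pow_add, two_mul_choose_two_add_self]

lemma zpow_sub_sq_add_sub_mul {K : Type*} [Field K] {q : K} (hq : q ≠ 0) (k l : ℕ) :
    q ^ (((k : ℤ) - l) ^ 2 + (k - l)) * (q ^ 2) ^ (k * l) =
      (q ^ 2) ^ k * (q ^ 2) ^ k.choose 2 * (q ^ 2) ^ l.choose 2 := by
  apply mul_right_cancel₀ (mul_ne_zero (pow_ne_zero k hq) (pow_ne_zero l hq))
  calc
    _ = q ^ (k ^ 2) * q ^ (l ^ 2) * (q ^ 2) ^ k := by
      simp only [← zpow_natCast, ← zpow_mul, ← zpow_add₀ hq]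
      congr 1
      push_cast
      ring
    _ = _ := by
      rw [← sq_pow_choose_two_mul_pow q k, ← sq_pow_choose_two_mul_pow q l]
      ring

lemma coeff_expand_two_mul {R : Type*} [CommRing R] (F G : R⟦X⟧) (n : ℕ) :
    coeff n (expand 2 two_ne_zero F * G) =
      ∑ t ∈ range (n / 2 + 1), coeff t F * coeff (n - 2 * t) G := by
  rw [coeff_mul]
  refine (sum_of_injOn (fun t ↦ (2 * t, n - 2 * t)) ?_ ?_ ?_ ?_).symm
  · intro s _ t _ hst
    simpa using congrArg Prod.fst hst
  · intro t ht
    have := mem_range.1 (mem_coe.1 ht)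
    exact mem_coe.2 (mem_antidiagonal.2 (Nat.add_sub_of_le (show 2 * t ≤ n by omega)))
  · intro p hp hp'
    rw [coeff_expand, if_neg, zero_mul]
    rintro ⟨t, ht⟩
    refine hp' ⟨t, ?_, ?_⟩
    · have := mem_antidiagonal.1 hp
      simp only [coe_range, Set.mem_Iio]
      omega
    · have := mem_antidiagonal.1 hp
      ext <;> simp only <;> omega
  · intro t _
    simp [coeff_expand]

/-- Remove from each pair `(k, l)` the common part `t` of the `q`-Vandermonde expansion. -/
lemma pairSeries_eq {q : ℂ} (hq0 : q ≠ 0) (hq : ¬IsOfFinOrder q) :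
    pairSeries q = expand 2 two_ne_zero (eulerInvSeries (q ^ 2)) *
      (rescale (q ^ 2) (eulerSeries (q ^ 2)) * eulerSeries (q ^ 2)) := by
  ext n
  rw [pairSeries, coeff_mk, coeff_expand_two_mul]
  simp only [coeff_mul, coeff_rescale, coeff_eulerSeries, coeff_eulerInvSeries]
  conv_lhs =>
    enter [2, p]
    rw [← sum_range_min_qVandermonde (not_isOfFinOrder_sq hq), mul_sum]
  simp only [mul_sum]
  rw [sum_sigma', sum_sigma']
  refine sum_nbij' (fun x ↦ ⟨x.2, (x.1.1 - x.2, x.1.2 - x.2)⟩)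
    (fun y ↦ ⟨(y.2.1 + y.1, y.2.2 + y.1), y.1⟩) ?_ ?_ ?_ ?_ ?_
  · rintro ⟨⟨k, l⟩, t⟩ h
    simp only [mem_sigma, HasAntidiagonal.mem_antidiagonal, mem_range] at h ⊢
    omega
  · rintro ⟨t, k, l⟩ h
    simp only [mem_sigma, HasAntidiagonal.mem_antidiagonal, mem_range] at h ⊢
    omega
  · rintro ⟨⟨k, l⟩, t⟩ h
    simp only [mem_sigma, HasAntidiagonal.mem_antidiagonal, mem_range] at h
    simp only [Sigma.mk.injEq, Prod.mk.injEq, heq_eq_eq, and_true]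
    omega
  · simp
  · rintro ⟨⟨k, l⟩, t⟩ h
    simp only [mem_sigma, mem_range] at h
    obtain ⟨κ, rfl⟩ := Nat.exists_eq_add_of_le' (show t ≤ k by omega)
    obtain ⟨μ, rfl⟩ := Nat.exists_eq_add_of_le' (show t ≤ l by omega)
    have := zpow_sub_sq_add_sub_mul hq0 κ μ
    simp only [Nat.add_sub_cancel, Nat.cast_add, add_sub_add_right_eq_sub]
    linear_combination
      invQPoch (q ^ 2) t * invQPoch (q ^ 2) κ * invQPoch (q ^ 2) μ * this

/-- In product form, multiply `pairSeries_eq` by `(-q X; q ^ 2)_∞`. -/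
lemma rescale_eulerSeries_mul_pairSeries {q : ℂ} (hq0 : q ≠ 0) (hq : ¬IsOfFinOrder q) :
    rescale q (eulerSeries (q ^ 2)) * pairSeries q =
      rescale (q ^ 2) (eulerSeries (q ^ 2)) * eulerInvSeries q := by
  rw [pairSeries_eq hq0 hq, ← expand_eulerInvSeries_mul_eulerSeries hq]
  ring

end FormalSeries

section InfiniteProducts

variable {q : ℂ}

lemma summable_norm_neg_mul_pow (a : ℂ) (hq : ‖q‖ < 1) :
    Summable fun n : ℕ ↦ ‖-(a * q ^ n)‖ := by
  simpa using (summable_geometric_of_norm_lt_one hq).norm.mul_left ‖a‖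

lemma multipliable_qPochInf (a : ℂ) (hq : ‖q‖ < 1) : Multipliable fun n : ℕ ↦ 1 - a * q ^ n := by
  simpa only [sub_eq_add_neg] using
    multipliable_one_add_of_summable (summable_norm_neg_mul_pow a hq)

lemma tendsto_qPoch (a : ℂ) (hq : ‖q‖ < 1) :
    Tendsto (qPoch a q) atTop (𝓝 (qPochInf a q)) :=
  (multipliable_qPochInf a hq).hasProd.tendsto_prod_nat

lemma qPochInf_self_ne_zero (hq : ‖q‖ < 1) : qPochInf q q ≠ 0 := by
  have hfactor (n : ℕ) : 1 + -(q * q ^ n) ≠ 0 := by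
    rw [← sub_eq_add_neg, ← pow_succ']
    exact one_sub_pow_succ_ne_zero (not_isOfFinOrder_of_norm_lt_one hq) n
  simpa only [qPochInf, sub_eq_add_neg] using
    tprod_one_add_ne_zero_of_summable hfactor (summable_norm_neg_mul_pow q hq)

lemma qPochInf_eq_one_sub_mul (a : ℂ) (hq : ‖q‖ < 1) :
    qPochInf a q = (1 - a) * qPochInf (a * q) q := by
  have hfactor (n : ℕ) : 1 - a * q ^ (n + 1) = 1 - a * q * q ^ n := by ring
  have hshift : Multipliable fun n : ℕ ↦ 1 - a * q ^ (n + 1) :=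
    (multipliable_qPochInf (a * q) hq).congr fun n ↦ (hfactor n).symm
  rw [qPochInf, tprod_eq_zero_mul' (f := fun n ↦ 1 - a * q ^ n) hshift, pow_zero, mul_one,
    tprod_congr hfactor, ← qPochInf]

lemma norm_sq_lt_one (hq : ‖q‖ < 1) : ‖q ^ 2‖ < 1 := by
  rw [norm_pow]
  exact pow_lt_one₀ (norm_nonneg q) hq two_ne_zero

lemma qPochInf_eq_sq_mul_sq (a : ℂ) (hq : ‖q‖ < 1) :
    qPochInf a q = qPochInf a (q ^ 2) * qPochInf (a * q) (q ^ 2) := by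
  have heven (n : ℕ) : 1 - a * q ^ (2 * n) = 1 - a * (q ^ 2) ^ n := by ring
  have hodd (n : ℕ) : 1 - a * q ^ (2 * n + 1) = 1 - a * q * (q ^ 2) ^ n := by ring
  rw [qPochInf, ← tprod_even_mul_odd, tprod_congr heven, tprod_congr hodd, ← qPochInf, ← qPochInf]
  · exact (multipliable_qPochInf a (norm_sq_lt_one hq)).congr fun n ↦ (heven n).symm
  · exact (multipliable_qPochInf (a * q) (norm_sq_lt_one hq)).congr fun n ↦ (hodd n).symm

lemma qPochInf_mul_qPochInf_neg (a : ℂ) (hq : ‖q‖ < 1) :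
    qPochInf a q * qPochInf (-a) q = qPochInf (a ^ 2) (q ^ 2) := by
  rw [qPochInf, qPochInf,
    ← (multipliable_qPochInf a hq).tprod_mul (multipliable_qPochInf (-a) hq), qPochInf]
  exact tprod_congr fun n ↦ by ring

lemma tendsto_invQPoch (hq : ‖q‖ < 1) :
    Tendsto (invQPoch q) atTop (𝓝 (qPochInf q q)⁻¹) :=
  (tendsto_qPoch q hq).inv₀ (qPochInf_self_ne_zero hq)

lemma exists_norm_invQPoch_le (hq : ‖q‖ < 1) : ∃ C, ∀ n, ‖invQPoch q n‖ ≤ C := by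
  obtain ⟨C, hC⟩ := (tendsto_invQPoch hq).norm.bddAbove_range
  exact ⟨C, fun n ↦ hC ⟨n, rfl⟩⟩

end InfiniteProducts

section EulerAndDurfee

variable {q : ℂ}

lemma tsum_durfee (hq : ‖q‖ < 1) (n : ℕ) :
    ∑' u : ℕ, q ^ (u * (u + n)) * (invQPoch q u * invQPoch q (u + n)) = (qPochInf q q)⁻¹ := by
  have hlim := tendsto_invQPoch hq
  obtain ⟨C, hC⟩ := exists_norm_invQPoch_le hq
  set term : ℕ → ℂ := fun u ↦ q ^ (u * (u + n)) * (invQPoch q u * invQPoch q (u + n)) with hterm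
  set truncated : ℕ → ℕ → ℂ := fun r u ↦ if u ≤ r then invQPoch q (r - u) * term u else 0
    with htruncated
  have hfinite (r : ℕ) : ∑' u, truncated r u = invQPoch q r * invQPoch q (r + n) := by
    rw [← sum_antidiagonal_durfee (not_isOfFinOrder_of_norm_lt_one hq),
      ← Nat.sum_antidiagonal_swap, Nat.sum_antidiagonal_eq_sum_range_succ_mk,
      tsum_eq_sum fun u hu ↦ if_neg fun h ↦ hu (mem_range_succ_iff.2 h)]
    refine sum_congr rfl fun u hu ↦ ?_
    simp only [hterm, if_pos (mem_range_succ_iff.1 hu), Prod.fst_swap, Prod.snd_swap]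
    ring
  have hpointwise (u : ℕ) : Tendsto (truncated · u) atTop (𝓝 ((qPochInf q q)⁻¹ * term u)) := by
    refine ((hlim.comp (tendsto_sub_atTop_nat u)).mul_const (term u)).congr' ?_
    filter_upwards [eventually_ge_atTop u] with r hr
    exact (if_pos hr).symm
  have hbound (r u : ℕ) : ‖truncated r u‖ ≤ C * (‖q‖ ^ u * (C * C)) := by
    have hC0 : 0 ≤ C := (norm_nonneg _).trans (hC 0)
    simp only [htruncated]
    split_ifs
    · simp only [hterm, norm_mul, norm_pow]
      have hpow : ‖q‖ ^ (u * (u + n)) ≤ ‖q‖ ^ u :=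
        pow_le_pow_of_le_one (norm_nonneg q) hq.le (by nlinarith [Nat.le_mul_self u])
      gcongr <;> exact hC _
    · rw [norm_zero]
      positivity
  have htendsto := tendsto_tsum_of_dominated_convergence
    (((summable_geometric_of_lt_one (norm_nonneg q) hq).mul_right (C * C)).mul_left C)
    hpointwise (.of_forall hbound)
  simp only [hfinite, tsum_mul_left] at htendsto
  exact mul_left_cancel₀ (inv_ne_zero (qPochInf_self_ne_zero hq))
    (tendsto_nhds_unique htendsto (hlim.mul (hlim.comp (tendsto_add_atTop_nat n))))

lemma summable_coeff_eulerSeries_mul_pow (hq : ‖q‖ < 1) (z : ℂ) :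
    Summable fun n ↦ coeff n (eulerSeries q) * z ^ n := by
  have hratio : Tendsto (fun n ↦ ‖q ^ n * z / (1 - q ^ (n + 1))‖) atTop (𝓝 0) := by
    have hpow := tendsto_pow_atTop_nhds_zero_of_norm_lt_one hq
    simpa using ((hpow.mul_const z).div ((hpow.comp (tendsto_add_atTop_nat 1)).const_sub 1)
      (by simp)).norm
  refine summable_of_ratio_norm_eventually_le one_half_lt_one ?_
  filter_upwards [hratio.eventually_le_const one_half_pos] with n hn
  have hq' := not_isOfFinOrder_of_norm_lt_one hq
  have hstep : coeff (n + 1) (eulerSeries q) * z ^ (n + 1) =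
      q ^ n * z / (1 - q ^ (n + 1)) * (coeff n (eulerSeries q) * z ^ n) := by
    rw [div_mul_eq_mul_div, eq_div_iff (one_sub_pow_succ_ne_zero hq' n)]
    linear_combination z ^ (n + 1) * one_sub_pow_mul_coeff_eulerSeries_succ hq' n
  rw [hstep, norm_mul]
  gcongr

lemma tsum_coeff_eulerSeries_mul_pow_eq_one_add_mul (hq : ‖q‖ < 1) (z : ℂ) :
    ∑' n, coeff n (eulerSeries q) * z ^ n =
      (1 + z) * ∑' n, coeff n (eulerSeries q) * (z * q) ^ n := by
  have hz := summable_coeff_eulerSeries_mul_pow hq z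
  have hzq := summable_coeff_eulerSeries_mul_pow hq (z * q)
  have hdiff : ∑' n, coeff n (eulerSeries q) * z ^ n - ∑' n, coeff n (eulerSeries q) * (z * q) ^ n
      = z * ∑' n, coeff n (eulerSeries q) * (z * q) ^ n := by
    rw [← hz.tsum_sub hzq, (hz.sub hzq).tsum_eq_zero_add, ← tsum_mul_left]
    simp only [pow_zero, sub_self, zero_add]
    refine tsum_congr fun n ↦ ?_
    linear_combination z ^ (n + 1) *
      one_sub_pow_mul_coeff_eulerSeries_succ (not_isOfFinOrder_of_norm_lt_one hq) n
  linear_combination hdiff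

lemma tsum_coeff_eulerSeries_mul_pow (hq : ‖q‖ < 1) (z : ℂ) :
    ∑' n, coeff n (eulerSeries q) * z ^ n = qPochInf (-z) q := by
  set F : ℂ → ℂ := fun z ↦ ∑' n, coeff n (eulerSeries q) * z ^ n
  have hiterate (N : ℕ) : qPoch (-z) q N * F (z * q ^ N) = F z := by
    induction N with
    | zero => simp [qPoch]
    | succ N ih =>
      rw [← ih, show F (z * q ^ N) = _ from tsum_coeff_eulerSeries_mul_pow_eq_one_add_mul hq _,
        qPoch, prod_range_succ, ← qPoch, pow_succ, ← mul_assoc z]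
      ring
  have hF0 : F 0 = 1 := by
    refine (tsum_eq_single 0 fun n hn ↦ by rw [zero_pow hn, mul_zero]).trans ?_
    simp
  have hlim : Tendsto (fun N ↦ F (z * q ^ N)) atTop (𝓝 (F 0)) := by
    refine tendsto_tsum_of_dominated_convergence (summable_coeff_eulerSeries_mul_pow hq z).norm
      (fun n ↦ ?_) (.of_forall fun N n ↦ ?_)
    · have hpow := (tendsto_pow_atTop_nhds_zero_of_norm_lt_one hq).const_mul z
      rw [mul_zero] at hpow
      exact (hpow.pow n).const_mul _
    · simp only [norm_mul, norm_pow]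
      gcongr
      exact mul_le_of_le_one_right (norm_nonneg z) (pow_le_one₀ (norm_nonneg q) hq.le)
  have hprod := (tendsto_qPoch (-z) hq).mul hlim
  simp only [hiterate, hF0, mul_one] at hprod
  exact tendsto_nhds_unique tendsto_const_nhds hprod

end EulerAndDurfee

section ThetaSeries

variable {q : ℂ}

/-- A pair of natural numbers is determined by its difference and its minimum. -/
def natProdEquivSubMin : ℕ × ℕ ≃ ℤ × ℕ where
  toFun p := (p.1 - p.2, min p.1 p.2)
  invFun x := (x.2 + x.1.toNat, x.2 + (-x.1).toNat)
  left_inv := by rintro ⟨a, b⟩; ext <;> simp only <;> omega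
  right_inv := by rintro ⟨n, u⟩; ext <;> simp only <;> omega

-- `a ^ 2 + b ^ 2 = n ^ 2 + 2 * u * (u + |n|)` with `n = a - b` and `u = min a b`; sum over `u`.
lemma tsum_mul_pow_sq_add_sq_mul_invQPoch (hq : ‖q‖ < 1) (w : ℤ → ℂ)
    (hw : Summable fun p : ℕ × ℕ ↦ w (p.1 - p.2) * q ^ (p.1 ^ 2 + p.2 ^ 2) *
      (invQPoch (q ^ 2) p.1 * invQPoch (q ^ 2) p.2)) :
    ∑' p : ℕ × ℕ, w (p.1 - p.2) * q ^ (p.1 ^ 2 + p.2 ^ 2) *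
      (invQPoch (q ^ 2) p.1 * invQPoch (q ^ 2) p.2) =
      (∑' n : ℤ, w n * q ^ n.natAbs ^ 2) * (qPochInf (q ^ 2) (q ^ 2))⁻¹ := by
  set f : ℕ × ℕ → ℂ := fun p ↦ w (p.1 - p.2) * q ^ (p.1 ^ 2 + p.2 ^ 2) *
    (invQPoch (q ^ 2) p.1 * invQPoch (q ^ 2) p.2)
  have hterm (n : ℤ) (u : ℕ) : f (natProdEquivSubMin.symm (n, u)) =
      w n * q ^ n.natAbs ^ 2 * ((q ^ 2) ^ (u * (u + n.natAbs)) *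
        (invQPoch (q ^ 2) u * invQPoch (q ^ 2) (u + n.natAbs))) := by
    obtain ⟨m, rfl | rfl⟩ := n.eq_nat_or_neg <;> simp [f, natProdEquivSubMin] <;> ring
  have hsum : Summable fun x ↦ f (natProdEquivSubMin.symm x) :=
    natProdEquivSubMin.symm.summable_iff.2 hw
  rw [← natProdEquivSubMin.symm.tsum_eq f, hsum.tsum_prod, ← tsum_mul_right]
  refine tsum_congr fun n ↦ ?_
  rw [← tsum_durfee (norm_sq_lt_one hq) n.natAbs, ← tsum_mul_left]
  exact tsum_congr (hterm n)

lemma tsum_zpow_jacobiTripleProduct (hq : ‖q‖ < 1) {z : ℂ} (hz : z ≠ 0) :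
    ∑' n : ℤ, z ^ n * q ^ n.natAbs ^ 2 =
      qPochInf (-(q * z)) (q ^ 2) * qPochInf (-(q / z)) (q ^ 2) * qPochInf (q ^ 2) (q ^ 2) := by
  have hq2 := norm_sq_lt_one hq
  have hsumz := summable_coeff_eulerSeries_mul_pow hq2 (q * z)
  have hsumz' := summable_coeff_eulerSeries_mul_pow hq2 (q / z)
  have hterm (p : ℕ × ℕ) : coeff p.1 (eulerSeries (q ^ 2)) * (q * z) ^ p.1 *
      (coeff p.2 (eulerSeries (q ^ 2)) * (q / z) ^ p.2) =
      z ^ ((p.1 : ℤ) - p.2) * q ^ (p.1 ^ 2 + p.2 ^ 2) *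
        (invQPoch (q ^ 2) p.1 * invQPoch (q ^ 2) p.2) := by
    simp only [coeff_eulerSeries, zpow_sub₀ hz, zpow_natCast, pow_add, mul_pow, div_pow,
      ← sq_pow_choose_two_mul_pow q]
    ring
  have hprod := tsum_mul_tsum_of_summable_norm hsumz.norm hsumz'.norm
  have hsum := summable_mul_of_summable_norm hsumz.norm hsumz'.norm
  simp only [hterm] at hprod hsum
  rw [tsum_mul_pow_sq_add_sq_mul_invQPoch hq _ hsum, tsum_coeff_eulerSeries_mul_pow hq2,
    tsum_coeff_eulerSeries_mul_pow hq2] at hprod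
  rw [hprod, inv_mul_cancel_right₀ (qPochInf_self_ne_zero hq2)]

lemma J_one_mul_qPochInf_neg (hq : ‖q‖ < 1) : J q 1 * qPochInf (-q) q = J q 2 := by
  rw [J, J, pow_one, qPochInf_mul_qPochInf_neg q hq]

lemma J_ne_zero (hq : ‖q‖ < 1) {m : ℕ} (hm : m ≠ 0) : J q m ≠ 0 :=
  qPochInf_self_ne_zero (by rw [norm_pow]; exact pow_lt_one₀ (norm_nonneg q) hq hm)

lemma zpow_mul_pow_natAbs_sq (hq0 : q ≠ 0) (m n : ℤ) :
    q ^ m * q ^ n.natAbs ^ 2 = q ^ (m + n ^ 2) := by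
  rw [← zpow_natCast, ← zpow_add₀ hq0, Nat.cast_pow, Int.natCast_natAbs, sq_abs]

lemma tsum_zpow_two_mul_sq_sub (hq0 : q ≠ 0) (hq : ‖q‖ < 1) :
    ∑' n : ℤ, q ^ (2 * n ^ 2 - n) = J q 2 ^ 2 / J q 1 := by
  have hq2 := norm_sq_lt_one hq
  have hterm (n : ℤ) : q ^ (2 * n ^ 2 - n) = q⁻¹ ^ n * (q ^ 2) ^ n.natAbs ^ 2 := by
    rw [inv_zpow', pow_right_comm, sq (q ^ _), ← mul_assoc, zpow_mul_pow_natAbs_sq hq0,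
      zpow_mul_pow_natAbs_sq hq0]
    ring_nf
  have hfactors : qPochInf (-(q ^ 2 * q⁻¹)) ((q ^ 2) ^ 2) *
      qPochInf (-(q ^ 2 / q⁻¹)) ((q ^ 2) ^ 2) = qPochInf (-q) (q ^ 2) := by
    have hq_inv : q ^ 2 * q⁻¹ = q := by field_simp
    rw [qPochInf_eq_sq_mul_sq (-q) hq2, hq_inv, div_inv_eq_mul, neg_mul, mul_comm q]
  have hbase : qPochInf ((q ^ 2) ^ 2) ((q ^ 2) ^ 2) = J q 2 * qPochInf (-q ^ 2) (q ^ 2) :=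
    (qPochInf_mul_qPochInf_neg (q ^ 2) hq2).symm
  have hneg : qPochInf (-q) q = qPochInf (-q) (q ^ 2) * qPochInf (-q ^ 2) (q ^ 2) := by
    rw [qPochInf_eq_sq_mul_sq (-q) hq, neg_mul, ← sq]
  have hJ := J_one_mul_qPochInf_neg hq
  rw [tsum_congr hterm, tsum_zpow_jacobiTripleProduct hq2 (inv_ne_zero hq0), hfactors, hbase,
    eq_div_iff (J_ne_zero hq one_ne_zero)]
  linear_combination J q 2 * hJ - J q 2 * J q 1 * hneg

lemma tsum_zpow_sub_sq_add (hq0 : q ≠ 0) (s : ℕ) :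
    ∑' n : ℤ, q ^ ((n - s) ^ 2 - n + n ^ 2) =
      q ^ s.choose 2 * ∑' n : ℤ, q ^ (2 * n ^ 2 - n) := by
  have hs : 2 * (s.choose 2 : ℤ) + s = s ^ 2 := mod_cast two_mul_choose_two_add_self s
  rw [← tsum_mul_left]
  simp only [← zpow_natCast q (s.choose 2), ← zpow_add₀ hq0]
  obtain ⟨u, rfl | rfl⟩ := s.even_or_odd'
  · rw [← (Equiv.addLeft (u : ℤ)).tsum_eq]
    refine tsum_congr fun n ↦ congrArg (q ^ ·) ?_
    push_cast [Equiv.coe_addLeft] at hs ⊢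
    linarith
  · rw [← (Equiv.subLeft (u + 1 : ℤ)).tsum_eq]
    refine tsum_congr fun n ↦ congrArg (q ^ ·) ?_
    push_cast [Equiv.subLeft_apply] at hs ⊢
    linarith

end ThetaSeries

section Regrouping

lemma hasSum_sum_of_mem_iff {α β M : Type*} [AddCommMonoid M] [TopologicalSpace M] [ContinuousAdd M]
    [RegularSpace M] {f : α → M} {a : M} (hf : HasSum f a) (g : α → β) {F : β → Finset α}
    (hF : ∀ x y, x ∈ F y ↔ g x = y) : HasSum (fun y ↦ ∑ x ∈ F y, f x) a := by
  refine ((Equiv.sigmaFiberEquiv g).hasSum_iff.2 hf).sigma fun y ↦ ?_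
  exact (Equiv.subtypeEquivRight fun x ↦ hF x y).hasSum_iff.1 ((F y).hasSum f)

lemma tsum_mul_coeff_mul_coeff {ι R : Type*} [CommRing R] [TopologicalSpace R]
    [IsTopologicalRing R] [T2Space R] {A B : R⟦X⟧} (K : ι → ℕ → R)
    (hK : Summable fun p : ι × ℕ × ℕ ↦
      K p.1 (p.2.1 + p.2.2) * (coeff p.2.1 A * coeff p.2.2 B)) :
    ∑' p : ι × ℕ × ℕ, K p.1 (p.2.1 + p.2.2) * (coeff p.2.1 A * coeff p.2.2 B) =
      ∑' x : ι × ℕ, K x.1 x.2 * coeff x.2 (A * B) := by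
  rw [← (hasSum_sum_of_mem_iff hK.hasSum (fun p ↦ (p.1, p.2.1 + p.2.2))
    (F := fun x ↦ {x.1} ×ˢ antidiagonal x.2) ?_).tsum_eq]
  · refine tsum_congr fun x ↦ ?_
    rw [sum_product, sum_singleton, coeff_mul, mul_sum]
    refine sum_congr rfl fun p hp ↦ ?_
    rw [mem_antidiagonal.1 hp]
  · rintro ⟨i, k, l⟩ ⟨i', m⟩
    grind [HasAntidiagonal.mem_antidiagonal]

end Regrouping

section Summability

variable {q : ℂ}

lemma summable_pow_add {ι : Type*} {r : ℝ} (hr0 : 0 ≤ r) (hr : r < 1) {d : ι → ℕ}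
    (hd : Summable fun x ↦ r ^ d x) : Summable fun p : ℕ × ι ↦ r ^ (p.1 + d p.2) := by
  simpa only [pow_add] using (summable_geometric_of_lt_one hr0 hr).mul_of_nonneg hd
    (fun _ ↦ pow_nonneg hr0 _) (fun _ ↦ pow_nonneg hr0 _)

lemma summable_zpow_mul {ι : Type*} (hq0 : q ≠ 0) (hq : ‖q‖ < 1) {d : ι → ℕ}
    (hd : Summable fun x ↦ ‖q‖ ^ d x) {e : ι → ℤ} {N : ℤ} (he : ∀ x, d x ≤ e x + N)
    {c : ι → ℂ} {C : ℝ} (hc : ∀ x, ‖c x‖ ≤ C) : Summable fun x ↦ q ^ e x * c x := by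
  refine .of_norm_bounded ((hd.mul_left (‖q‖ ^ (-N))).mul_right C) fun x ↦ ?_
  have hexp : ‖q‖ ^ e x ≤ ‖q‖ ^ (-N) * ‖q‖ ^ d x := by
    rw [← zpow_natCast, ← zpow_add₀ (norm_ne_zero_iff.2 hq0)]
    exact zpow_le_zpow_right_of_le_one₀ (norm_pos_iff.2 hq0) hq.le (by linarith [he x])
  rw [norm_mul, norm_zpow]
  gcongr
  exact hc x

lemma neg_le_sq (a : ℤ) : -a ≤ a ^ 2 := by
  simpa using Int.le_self_sq (-a)

/-- The part of the quadruple sum that depends on `i`: it sees `j`, `k` and `l` only through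
`m = j + k + l`. -/
noncomputable def coupling (q : ℂ) (i m : ℕ) : ℂ :=
  q ^ (((i : ℤ) - m) ^ 2 + i ^ 2 - i) * invQPoch (q ^ 2) i

lemma pow_mul_coeff_eulerSeries_sq (n : ℕ) :
    q ^ n * coeff n (eulerSeries (q ^ 2)) = q ^ n ^ 2 * invQPoch (q ^ 2) n := by
  rw [coeff_eulerSeries, ← sq_pow_choose_two_mul_pow]
  ring

lemma coupling_mul_eq_quadruple (hq0 : q ≠ 0) (i j k l : ℕ) :
    coupling q i (j + (k + l)) * (coeff j (rescale q (eulerSeries (q ^ 2))) *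
      (q ^ (((k : ℤ) - l) ^ 2 + (k - l)) * (invQPoch (q ^ 2) k * invQPoch (q ^ 2) l))) =
    q ^ (2 * (i : ℤ) ^ 2 + 2 * j ^ 2 + 2 * k ^ 2 + 2 * l ^ 2 - 2 * i * j - 2 * i * k - 2 * i * l +
      2 * j * k + 2 * j * l - i + k - l) *
      (invQPoch (q ^ 2) i * invQPoch (q ^ 2) j * invQPoch (q ^ 2) k * invQPoch (q ^ 2) l) := by
  have hexp : q ^ (((i : ℤ) - (j + (k + l) : ℕ)) ^ 2 + i ^ 2 - i) *
      (q ^ j ^ 2 * q ^ (((k : ℤ) - l) ^ 2 + (k - l))) =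
      q ^ (2 * (i : ℤ) ^ 2 + 2 * j ^ 2 + 2 * k ^ 2 + 2 * l ^ 2 - 2 * i * j - 2 * i * k -
        2 * i * l + 2 * j * k + 2 * j * l - i + k - l) := by
    rw [← zpow_natCast q, ← zpow_add₀ hq0, ← zpow_add₀ hq0]
    push_cast
    ring_nf
  rw [coupling, coeff_rescale, pow_mul_coeff_eulerSeries_sq, ← hexp]
  ring

lemma coupling_mul_eq_triple (hq0 : q ≠ 0) (i k s : ℕ) :
    coupling q i (k + s) * (coeff k (rescale (q ^ 2) (eulerSeries (q ^ 2))) *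
      coeff s (eulerInvSeries q)) =
    q ^ (((i : ℤ) - k - s) ^ 2 - (i - k) + (i ^ 2 + k ^ 2 : ℕ)) *
      (invQPoch (q ^ 2) i * invQPoch (q ^ 2) k * invQPoch q s) := by
  have hexp : q ^ (((i : ℤ) - (k + s : ℕ)) ^ 2 + i ^ 2 - i) * (q ^ k * q ^ k ^ 2) =
      q ^ (((i : ℤ) - k - s) ^ 2 - (i - k) + (i ^ 2 + k ^ 2 : ℕ)) := by
    rw [← pow_add, ← zpow_natCast q, ← zpow_add₀ hq0]
    push_cast
    ring_nf
  rw [coupling, coeff_rescale, ← pow_mul, two_mul, pow_add, mul_assoc (q ^ k),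
    pow_mul_coeff_eulerSeries_sq, coeff_eulerInvSeries, ← hexp]
  ring

lemma summable_quadruple (hq0 : q ≠ 0) (hq : ‖q‖ < 1) :
    Summable fun p : ℕ × ℕ × ℕ × ℕ ↦ coupling q p.1 (p.2.1 + (p.2.2.1 + p.2.2.2)) *
      (coeff p.2.1 (rescale q (eulerSeries (q ^ 2))) *
        (q ^ (((p.2.2.1 : ℤ) - p.2.2.2) ^ 2 + (p.2.2.1 - p.2.2.2)) *
          (invQPoch (q ^ 2) p.2.2.1 * invQPoch (q ^ 2) p.2.2.2))) := by
  obtain ⟨C, hC⟩ := exists_norm_invQPoch_le (norm_sq_lt_one hq)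
  have hC0 : 0 ≤ C := (norm_nonneg _).trans (hC 0)
  have hr0 := norm_nonneg q
  simp only [coupling_mul_eq_quadruple hq0]
  refine summable_zpow_mul hq0 hq (N := 3) (C := C * C * C * C)
    (summable_pow_add hr0 hq <| summable_pow_add hr0 hq <| summable_pow_add hr0 hq <|
      summable_geometric_of_lt_one hr0 hq) ?_ ?_
  · rintro ⟨i, j, k, l⟩
    push_cast
    nlinarith [neg_le_sq ((i : ℤ) - j - k - l), neg_le_sq ((k : ℤ) - l),
      sq_nonneg (2 * (i : ℤ) - 3), sq_nonneg (j : ℤ)]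
  · rintro ⟨i, j, k, l⟩
    simp only [norm_mul]
    gcongr <;> exact hC _

lemma summable_triple (hq0 : q ≠ 0) (hq : ‖q‖ < 1) :
    Summable fun p : ℕ × ℕ × ℕ ↦ coupling q p.1 (p.2.1 + p.2.2) *
      (coeff p.2.1 (rescale (q ^ 2) (eulerSeries (q ^ 2))) * coeff p.2.2 (eulerInvSeries q)) := by
  obtain ⟨C, hC⟩ := exists_norm_invQPoch_le (norm_sq_lt_one hq)
  obtain ⟨D, hD⟩ := exists_norm_invQPoch_le hq
  have hC0 : 0 ≤ C := (norm_nonneg _).trans (hC 0)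
  have hr0 := norm_nonneg q
  simp only [coupling_mul_eq_triple hq0]
  refine summable_zpow_mul hq0 hq (N := 3) (C := C * C * D)
    (summable_pow_add hr0 hq <| summable_pow_add hr0 hq <|
      summable_geometric_of_lt_one hr0 hq) ?_ ?_
  · rintro ⟨i, k, s⟩
    push_cast
    nlinarith [neg_le_sq ((i : ℤ) - k - s), sq_nonneg (2 * (i : ℤ) - 3), sq_nonneg (k : ℤ)]
  · rintro ⟨i, k, s⟩
    simp only [norm_mul]
    gcongr
    exacts [hC _, hC _, hD _]

end Summability

section Evaluation

variable {q : ℂ}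

lemma tsum_quadruple (hq0 : q ≠ 0) (hq : ‖q‖ < 1) :
    ∑' p : ℕ × ℕ × ℕ × ℕ, coupling q p.1 (p.2.1 + (p.2.2.1 + p.2.2.2)) *
      (coeff p.2.1 (rescale q (eulerSeries (q ^ 2))) *
        (q ^ (((p.2.2.1 : ℤ) - p.2.2.2) ^ 2 + (p.2.2.1 - p.2.2.2)) *
          (invQPoch (q ^ 2) p.2.2.1 * invQPoch (q ^ 2) p.2.2.2))) =
      ∑' x : ℕ × ℕ, coupling q x.1 x.2 *
        coeff x.2 (rescale q (eulerSeries (q ^ 2)) * pairSeries q) := by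
  have hfiber := hasSum_sum_of_mem_iff (summable_quadruple hq0 hq).hasSum
    (fun p ↦ (p.1, p.2.1, p.2.2.1 + p.2.2.2))
    (F := fun y ↦ {y.1} ×ˢ {y.2.1} ×ˢ antidiagonal y.2.2) (by
      rintro ⟨i, j, k, l⟩ ⟨i', j', n⟩
      grind [HasAntidiagonal.mem_antidiagonal])
  have hinner (y : ℕ × ℕ × ℕ) := calc
    ∑ p ∈ {y.1} ×ˢ {y.2.1} ×ˢ antidiagonal y.2.2, coupling q p.1 (p.2.1 + (p.2.2.1 + p.2.2.2)) *
      (coeff p.2.1 (rescale q (eulerSeries (q ^ 2))) *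
        (q ^ (((p.2.2.1 : ℤ) - p.2.2.2) ^ 2 + (p.2.2.1 - p.2.2.2)) *
          (invQPoch (q ^ 2) p.2.2.1 * invQPoch (q ^ 2) p.2.2.2)))
    _ = coupling q y.1 (y.2.1 + y.2.2) *
      (coeff y.2.1 (rescale q (eulerSeries (q ^ 2))) * coeff y.2.2 (pairSeries q)) := by
        rw [sum_product, sum_singleton, sum_product, sum_singleton, pairSeries, coeff_mk, mul_sum,
          mul_sum]
        refine sum_congr rfl fun p hp ↦ ?_
        rw [mem_antidiagonal.1 hp]
  simp only [hinner] at hfiber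
  rw [← hfiber.tsum_eq, tsum_mul_coeff_mul_coeff _ hfiber.summable]

lemma qPochInf_neg_one (hq : ‖q‖ < 1) : qPochInf (-1) q = 2 * (J q 2 / J q 1) := by
  rw [qPochInf_eq_one_sub_mul (-1) hq, ← J_one_mul_qPochInf_neg hq,
    mul_div_cancel_left₀ _ (J_ne_zero hq one_ne_zero)]
  norm_num

lemma tsum_triple_fiber (hq0 : q ≠ 0) (hq : ‖q‖ < 1) (s : ℕ)
    (hs : Summable fun p : ℕ × ℕ ↦ coupling q p.1 (p.2 + s) *
      (coeff p.2 (rescale (q ^ 2) (eulerSeries (q ^ 2))) * coeff s (eulerInvSeries q))) :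
    ∑' p : ℕ × ℕ, coupling q p.1 (p.2 + s) *
      (coeff p.2 (rescale (q ^ 2) (eulerSeries (q ^ 2))) * coeff s (eulerInvSeries q)) =
      coeff s (eulerSeries q) * (J q 2 / J q 1) := by
  set w : ℤ → ℂ := fun n ↦ invQPoch q s * q ^ ((n - s) ^ 2 - n) with hw
  have hterm (p : ℕ × ℕ) : coupling q p.1 (p.2 + s) *
      (coeff p.2 (rescale (q ^ 2) (eulerSeries (q ^ 2))) * coeff s (eulerInvSeries q)) =
      w (p.1 - p.2) * q ^ (p.1 ^ 2 + p.2 ^ 2) *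
        (invQPoch (q ^ 2) p.1 * invQPoch (q ^ 2) p.2) := by
    rw [coupling_mul_eq_triple hq0, zpow_add₀ hq0, zpow_natCast]
    ring
  simp only [hterm] at hs ⊢
  rw [tsum_mul_pow_sq_add_sq_mul_invQPoch hq w hs]
  simp only [hw, mul_assoc, zpow_mul_pow_natAbs_sq hq0]
  rw [tsum_mul_left, tsum_zpow_sub_sq_add hq0, tsum_zpow_two_mul_sq_sub hq0 hq, coeff_eulerSeries]
  have := J_ne_zero hq two_ne_zero
  rw [← J]
  field_simp

lemma tsum_triple (hq0 : q ≠ 0) (hq : ‖q‖ < 1) :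
    ∑' p : ℕ × ℕ × ℕ, coupling q p.1 (p.2.1 + p.2.2) *
      (coeff p.2.1 (rescale (q ^ 2) (eulerSeries (q ^ 2))) * coeff p.2.2 (eulerInvSeries q)) =
      2 * J q 2 ^ 2 / J q 1 ^ 2 := by
  set f : ℕ × ℕ × ℕ → ℂ := fun p ↦ coupling q p.1 (p.2.1 + p.2.2) *
    (coeff p.2.1 (rescale (q ^ 2) (eulerSeries (q ^ 2))) * coeff p.2.2 (eulerInvSeries q))
  set e : ℕ × ℕ × ℕ ≃ ℕ × ℕ × ℕ := (Equiv.prodComm _ _).trans (Equiv.prodAssoc _ _ _)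
  have hsum : Summable fun x ↦ f (e x) := e.summable_iff.2 (summable_triple hq0 hq)
  have hfiber (s : ℕ) := tsum_triple_fiber hq0 hq s (hsum.prod_factor s)
  have hEuler : ∑' s, coeff s (eulerSeries q) = 2 * (J q 2 / J q 1) := by
    simpa only [one_pow, mul_one, qPochInf_neg_one hq] using tsum_coeff_eulerSeries_mul_pow hq 1
  calc ∑' p, f p
    _ = ∑' x, f (e x) := (e.tsum_eq f).symm
    _ = ∑' s, coeff s (eulerSeries q) * (J q 2 / J q 1) := by
      rw [hsum.tsum_prod]
      exact tsum_congr hfiber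
    _ = 2 * J q 2 ^ 2 / J q 1 ^ 2 := by
      rw [tsum_mul_right, hEuler]
      ring

end Evaluation

theorem stmt_6 (q : ℂ) (h0 : 0 < ‖q‖) (h1 : ‖q‖ < 1) :
    (∑' p : ℕ × ℕ × ℕ × ℕ,
      (fun (i j k l : ℕ) =>
        q ^ ((2*(i:ℤ)^2 + 2*(j:ℤ)^2 + 2*(k:ℤ)^2 + 2*(l:ℤ)^2 - 2*(i:ℤ)*(j:ℤ) - 2*(i:ℤ)*(k:ℤ) - 2*(i:ℤ)*(l:ℤ) + 2*(j:ℤ)*(k:ℤ) + 2*(j:ℤ)*(l:ℤ) - (i:ℤ) + (k:ℤ) - (l:ℤ)) : ℤ) /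
          (qPoch (q ^ 2) (q ^ 2) i * qPoch (q ^ 2) (q ^ 2) j * qPoch (q ^ 2) (q ^ 2) k * qPoch (q ^ 2) (q ^ 2) l))
        p.1 p.2.1 p.2.2.1 p.2.2.2)
    = 2 * (J q 2)^2 / (J q 1)^2 := by
  have hq0 : q ≠ 0 := norm_pos_iff.1 h0
  rw [← tsum_triple hq0 h1, tsum_mul_coeff_mul_coeff _ (summable_triple hq0 h1),
    ← rescale_eulerSeries_mul_pairSeries hq0 (not_isOfFinOrder_of_norm_lt_one h1),
    ← tsum_quadruple hq0 h1]
  refine tsum_congr fun p ↦ ?_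
  rw [coupling_mul_eq_quadruple hq0]
  simp only [invQPoch, div_eq_mul_inv, mul_inv]
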